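/- Proposition 1 (MMF-DoF of classical beamforming): Suppose M ≥ 2, N ≥ 1, σ² > 0, and the generic rank assumption holds. Then the limit lim_{P→∞} ℛ(P)/log₂(P) exists and equals: 1 if N ≥ N_M; 1/2 if N_{M−1} + G₁ ≤ N < N_M; and 0 if N < N_{M−1} + G₁. -/

import Mathlib

/-!
Every SINR is compared with a power of `P`: if the best achievable minimum of
`1 + SINR` is of exact order `P ^ d`, then the max-min rate is `d * log₂ P + O(1)` (`tendsto_of_sinr_bounds`). Two consequences
of the generic rank assumption control these orders.

* A set of fewer than `N` users can be zero-forced by a beam that all remaining users hear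
  (`exists_zero_forcing`).
* Among any `N` users, at least one hears a given beam with strength at least a fixed multiple of
  its power (`exists_pos_le_hinner`).

With `K` the total number of users, the thresholds read `N_M = 1 + K - G₁` and
`N_{M-1} + G₁ = 1 + K - G_M`.

* If `N > K - G₁`, every beam can be hidden from all unintended users, so SINRs of order `P` are
  achieved; the noise alone forbids more.
* If `K - G_M < N ≤ K - G₁`, every beam can be hidden from the unintended users outside the
  largest group. Giving that group power of order `P` and the others power of order `√P` yields
  SINRs of order `√P`. Conversely, the beam of the smallest group is heard by an unintended user:
  its power is either at most `√P`, limiting its own group, or more than `√P`, limiting that user.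
* If `N ≤ K - G_M`, the strongest beam is heard by some unintended user, whose own beam is no
  stronger, so the SINR of that user is bounded.
-/

open scoped BigOperators

noncomputable section

/-- `hᴴ p`. -/
def hinner {N : ℕ} (h p : Fin N → ℂ) : ℂ := ∑ i, star (h i) * p i

/-- Transmit power of a beamformer. -/
def bpow {N : ℕ} (p : Fin N → ℂ) : ℝ := ∑ i, ‖p i‖ ^ 2

/-- Generic rank assumption. -/
def GenericRank {N K : ℕ} (h : Fin K → Fin N → ℂ) : Prop :=
  ∀ S : Finset (Fin K),
    (Matrix.of fun (i : Fin N) (k : S) => h k.1 i).rank = min N S.card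

/-- Size of group `m` (groups indexed from `0`). -/
def Gsize {K M : ℕ} (μ : Fin K → Fin M) (m : ℕ) : ℕ :=
  (Finset.univ.filter fun k => (μ k : ℕ) = m).card

/-- `N_L = 1 + Σ_{m=2}^{L} G_m` (`1`-indexed), i.e. `1 + Σ_{m=1}^{L-1} G_m` with our
`0`-indexed groups. -/
def NL {K M : ℕ} (μ : Fin K → Fin M) (L : ℕ) : ℕ :=
  1 + ∑ m ∈ Finset.Ico 1 L, Gsize μ m

/-- Rate of user `k` under classical (designated) beamforming `p`. -/
def userRate {N K M : ℕ} (h : Fin K → Fin N → ℂ) (μ : Fin K → Fin M)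
    (σ2 : ℝ) (p : Fin M → Fin N → ℂ) (k : Fin K) : ℝ :=
  Real.logb 2 (1 + ‖hinner (h k) (p (μ k))‖ ^ 2 /
    ((∑ m ∈ Finset.univ.erase (μ k), ‖hinner (h k) (p m)‖ ^ 2) + σ2))

/-- Max-min fair value of classical (designated) beamforming: the supremum, over all
beamforming matrices satisfying the total power constraint, of the minimum over groups
of the minimum user rate within the group. -/
def MMFclassical {N K M : ℕ} (h : Fin K → Fin N → ℂ) (μ : Fin K → Fin M)
    (σ2 : ℝ) (P : ℝ) : ℝ :=
  sSup { r : ℝ | ∃ p : Fin M → Fin N → ℂ,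
    (∑ m, bpow (p m)) ≤ P ∧
    r = ⨅ m : Fin M, ⨅ i : {i : Fin K // μ i = m}, userRate h μ σ2 p i.1 }

/-- The signal-to-interference-plus-noise ratio of user `k`. -/
def sinr {N K M : ℕ} (h : Fin K → Fin N → ℂ) (μ : Fin K → Fin M)
    (σ2 : ℝ) (p : Fin M → Fin N → ℂ) (k : Fin K) : ℝ :=
  ‖hinner (h k) (p (μ k))‖ ^ 2 /
    ((∑ m ∈ Finset.univ.erase (μ k), ‖hinner (h k) (p m)‖ ^ 2) + σ2)

/-! ### Beams and generic channels -/

section LinearAlgebra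

variable {N K : ℕ}

lemma bpow_nonneg (p : Fin N → ℂ) : 0 ≤ bpow p :=
  Finset.sum_nonneg fun _ _ => by positivity

lemma bpow_smul (a : ℂ) (p : Fin N → ℂ) : bpow (a • p) = ‖a‖ ^ 2 * bpow p := by
  simp [bpow, Finset.mul_sum, mul_pow]

lemma hinner_smul (a : ℂ) (h p : Fin N → ℂ) : hinner h (a • p) = a * hinner h p := by
  simp only [hinner, Finset.mul_sum, Pi.smul_apply, smul_eq_mul]
  exact Finset.sum_congr rfl fun _ _ => by ring

lemma norm_hinner_sq_le (h p : Fin N → ℂ) : ‖hinner h p‖ ^ 2 ≤ bpow h * bpow p := by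
  calc ‖hinner h p‖ ^ 2 ≤ (∑ i, ‖h i‖ * ‖p i‖) ^ 2 := by
        gcongr
        refine (norm_sum_le _ _).trans_eq (Finset.sum_congr rfl fun i _ => ?_)
        rw [norm_mul, norm_star]
    _ ≤ _ := Finset.sum_mul_sq_le_sq_mul_sq _ _ _

/-- The linear map `p ↦ hᴴ p`. -/
def hinnerLin (h : Fin N → ℂ) : (Fin N → ℂ) →ₗ[ℂ] ℂ where
  toFun := hinner h
  map_add' p q := by simp [hinner, mul_add, Finset.sum_add_distrib]
  map_smul' a p := by simp [hinner_smul]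

/-- The noiseless received signals of the users in `S`, as a linear function of the beam. -/
def recvMap (h : Fin K → Fin N → ℂ) (S : Finset (Fin K)) : (Fin N → ℂ) →ₗ[ℂ] (S → ℂ) :=
  LinearMap.pi fun k => hinnerLin (h k.1)

lemma recvMap_apply (h : Fin K → Fin N → ℂ) (S : Finset (Fin K)) (p : Fin N → ℂ) (k : S) :
    recvMap h S p k = hinner (h k.1) p := rfl

lemma mem_ker_recvMap {h : Fin K → Fin N → ℂ} {S : Finset (Fin K)} {p : Fin N → ℂ} :
    p ∈ LinearMap.ker (recvMap h S) ↔ ∀ k ∈ S, hinner (h k) p = 0 := by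
  simp [LinearMap.mem_ker, funext_iff, recvMap_apply]

open scoped ComplexOrder in
lemma finrank_ker_recvMap {h : Fin K → Fin N → ℂ} (hrank : GenericRank h)
    (S : Finset (Fin K)) :
    min N S.card + Module.finrank ℂ (LinearMap.ker (recvMap h S)) = N := by
  have h1 : recvMap h S =
      (Matrix.of fun (i : Fin N) (k : S) => h k.1 i).conjTranspose.mulVecLin := by
    ext p k
    simp [recvMap_apply, hinner, Matrix.mulVec, dotProduct, Matrix.conjTranspose_apply]
  have h2 := (recvMap h S).finrank_range_add_finrank_ker
  rw [Module.finrank_fin_fun] at h2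
  rw [← hrank S, ← Matrix.rank_conjTranspose, Matrix.rank, ← h1]
  exact h2

/-- Zero-forcing: a beam invisible to fewer than `N` users can be chosen visible to all the
others. Each additional user cuts down the dimension of the null space, and finitely many proper
subspaces do not cover a complex vector space. -/
lemma exists_zero_forcing {h : Fin K → Fin N → ℂ} (hrank : GenericRank h)
    (S : Finset (Fin K)) (hS : S.card < N) :
    ∃ p : Fin N → ℂ, (∀ k ∈ S, hinner (h k) p = 0) ∧ ∀ k ∉ S, hinner (h k) p ≠ 0 := by
  obtain ⟨p, hp, hp'⟩ := Module.Dual.exists_forall_mem_ne_zero_of_forall_exists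
    (LinearMap.ker (recvMap h S)) (fun k : {k // k ∉ S} => hinnerLin (h k.1)) (by
      rintro ⟨k, hk⟩
      by_contra! hcon
      have hle : LinearMap.ker (recvMap h S) ≤ LinearMap.ker (recvMap h (insert k S)) := by
        intro p hp
        rw [mem_ker_recvMap]
        intro j hj
        rcases Finset.mem_insert.1 hj with rfl | hj
        · exact hcon p hp
        · exact mem_ker_recvMap.1 hp j hj
      have h1 := Submodule.finrank_mono hle
      have h2 := finrank_ker_recvMap hrank S
      have h3 := finrank_ker_recvMap hrank (insert k S)
      rw [Finset.card_insert_of_notMem hk] at h3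
      omega)
  exact ⟨p, mem_ker_recvMap.1 hp, fun k hk => hp' ⟨k, hk⟩⟩

/-- The channels of `N` or more users span `ℂ^N`, so any beam is heard by one of these users
with a strength proportional to the power of the beam. -/
lemma exists_pos_le_hinner {h : Fin K → Fin N → ℂ} (hrank : GenericRank h) (hN : 1 ≤ N)
    (T : Finset (Fin K)) (hT : N ≤ T.card) :
    ∃ c : ℝ, 0 < c ∧ ∀ p : Fin N → ℂ, ∃ k ∈ T, c * bpow p ≤ ‖hinner (h k) p‖ ^ 2 := by
  have hker : LinearMap.ker (recvMap h T) = ⊥ := by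
    have := finrank_ker_recvMap hrank T
    rw [← Submodule.finrank_eq_zero]
    omega
  obtain ⟨C, hC, hanti⟩ := LinearMap.exists_antilipschitzWith _ hker
  have hC' : (0 : ℝ) < C := hC
  have hNpos : (0 : ℝ) < N := by exact_mod_cast hN
  obtain ⟨k₀, hk₀⟩ : T.Nonempty := Finset.card_pos.1 (by omega)
  refine ⟨1 / (N * (C : ℝ) ^ 2), by positivity, fun p => ?_⟩
  rcases (bpow_nonneg p).eq_or_lt with h0 | hpos
  · exact ⟨k₀, hk₀, by rw [← h0, mul_zero]; positivity⟩
  by_contra! hcon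
  set r := √(1 / (N * (C : ℝ) ^ 2) * bpow p) with hr
  have hrpos : 0 < r := Real.sqrt_pos.2 (by positivity)
  have hrsq : r ^ 2 = 1 / (N * (C : ℝ) ^ 2) * bpow p := Real.sq_sqrt (by positivity)
  have h1 : ‖recvMap h T p‖ < r := by
    rw [pi_norm_lt_iff hrpos]
    intro k
    exact Real.lt_sqrt_of_sq_lt (hcon k.1 k.2)
  have h2 : ‖p‖ ≤ C * ‖recvMap h T p‖ := by
    simpa using hanti.le_mul_dist p 0
  have h3 : ‖p‖ < C * r := h2.trans_lt (by gcongr)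
  have h4 : bpow p ≤ N * ‖p‖ ^ 2 := by
    calc bpow p ≤ ∑ _i : Fin N, ‖p‖ ^ 2 :=
          Finset.sum_le_sum fun i _ => by gcongr; exact norm_le_pi_norm p i
      _ = _ := by simp
  have h5 : N * ‖p‖ ^ 2 < N * (C * r) ^ 2 := by gcongr
  have h6 : N * (C * r) ^ 2 = bpow p := by
    rw [mul_pow, hrsq]; field_simp
  linarith

end LinearAlgebra

/-! ### SINR bounds and degrees of freedom -/

section Sinr

variable {N K M : ℕ} {h : Fin K → Fin N → ℂ} {μ : Fin K → Fin M} {σ2 : ℝ}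

lemma userRate_eq (p : Fin M → Fin N → ℂ) (k : Fin K) :
    userRate h μ σ2 p k = Real.logb 2 (1 + sinr h μ σ2 p k) := rfl

lemma interference_nonneg (p : Fin M → Fin N → ℂ) (k : Fin K) :
    0 ≤ ∑ m ∈ Finset.univ.erase (μ k), ‖hinner (h k) (p m)‖ ^ 2 :=
  Finset.sum_nonneg fun _ _ => by positivity

lemma sinr_nonneg (hσ : 0 < σ2) (p : Fin M → Fin N → ℂ) (k : Fin K) :
    0 ≤ sinr h μ σ2 p k :=
  div_nonneg (by positivity) (by linarith [interference_nonneg (h := h) (μ := μ) p k])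

/-- A constant bounding every channel gain. -/
lemma exists_gain_bound (h : Fin K → Fin N → ℂ) :
    ∃ C : ℝ, 0 < C ∧ ∀ k p, ‖hinner (h k) p‖ ^ 2 ≤ C * bpow p := by
  refine ⟨∑ k, bpow (h k) + 1, by
    have : 0 ≤ ∑ k, bpow (h k) := Finset.sum_nonneg fun _ _ => bpow_nonneg _
    linarith, fun k p => (norm_hinner_sq_le _ _).trans ?_⟩
  gcongr
  · exact bpow_nonneg p
  · have := Finset.single_le_sum (f := fun k => bpow (h k)) (fun _ _ => bpow_nonneg _)
      (Finset.mem_univ k)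
    linarith

lemma sinr_le_noise (hσ : 0 < σ2) {C : ℝ}
    (hC : ∀ k p, ‖hinner (h k) p‖ ^ 2 ≤ C * bpow p) (p : Fin M → Fin N → ℂ) (k : Fin K) :
    sinr h μ σ2 p k ≤ C * bpow (p (μ k)) / σ2 := by
  have h1 := interference_nonneg (h := h) (μ := μ) p k
  have h2 := hC k (p (μ k))
  unfold sinr
  gcongr
  · exact (by positivity : (0 : ℝ) ≤ _).trans h2
  · linarith

/-- Interference from a single beam `m` already limits the SINR. -/
lemma sinr_le_interference (hσ : 0 < σ2) {C I : ℝ} (hI : 0 < I)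
    (hC : ∀ k p, ‖hinner (h k) p‖ ^ 2 ≤ C * bpow p) (p : Fin M → Fin N → ℂ) (k : Fin K)
    {m : Fin M} (hm : μ k ≠ m) (hle : I ≤ ‖hinner (h k) (p m)‖ ^ 2) :
    sinr h μ σ2 p k ≤ C * bpow (p (μ k)) / I := by
  have h1 := Finset.single_le_sum (f := fun m => ‖hinner (h k) (p m)‖ ^ 2)
    (fun _ _ => by positivity) (Finset.mem_erase.2 ⟨hm.symm, Finset.mem_univ m⟩)
  have h2 := hC k (p (μ k))
  unfold sinr
  gcongr
  · exact (by positivity : (0 : ℝ) ≤ _).trans h2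
  · linarith

lemma bpow_le_total {p : Fin M → Fin N → ℂ} {P : ℝ} (hp : ∑ m, bpow (p m) ≤ P) (m : Fin M) :
    bpow (p m) ≤ P :=
  (Finset.single_le_sum (f := fun m => bpow (p m)) (fun _ _ => bpow_nonneg _)
    (Finset.mem_univ m)).trans hp

lemma min_rate_le (p : Fin M → Fin N → ℂ) (k : Fin K) :
    (⨅ m : Fin M, ⨅ i : {i : Fin K // μ i = m}, userRate h μ σ2 p i.1) ≤
      userRate h μ σ2 p k :=
  (ciInf_le (Set.finite_range _).bddBelow (μ k)).trans
    (ciInf_le (Set.finite_range _).bddBelow (⟨k, rfl⟩ : {i : Fin K // μ i = μ k}))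

/-- If every admissible choice of beams leaves some user with SINR at most `B`, then the max-min
rate is at most `log₂ (1 + B)`. -/
lemma MMFclassical_le {P B : ℝ} (hσ : 0 < σ2) (hP : 0 ≤ P)
    (hB : ∀ p : Fin M → Fin N → ℂ, ∑ m, bpow (p m) ≤ P → ∃ k, sinr h μ σ2 p k ≤ B) :
    MMFclassical h μ σ2 P ≤ Real.logb 2 (1 + B) := by
  refine csSup_le ⟨_, 0, by simpa [bpow] using hP, rfl⟩ ?_
  rintro _ ⟨p, hp, rfl⟩
  obtain ⟨k, hk⟩ := hB p hp
  refine (min_rate_le p k).trans ?_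
  rw [userRate_eq]
  have := sinr_nonneg (h := h) (μ := μ) hσ p k
  exact Real.logb_le_logb_of_le (by norm_num) (by linarith) (by linarith)

/-- A choice of beams giving every user rate at least `b` shows that the max-min rate is at
least `b`; the boundedness above needed for the real supremum comes from the single-user bound. -/
lemma le_MMFclassical (hsurj : Function.Surjective μ) (hM : 0 < M) (hσ : 0 < σ2) {P b : ℝ}
    (p : Fin M → Fin N → ℂ) (hp : ∑ m, bpow (p m) ≤ P) (hb : ∀ k, b ≤ userRate h μ σ2 p k) :
    b ≤ MMFclassical h μ σ2 P := by
  have : Nonempty (Fin M) := ⟨⟨0, hM⟩⟩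
  refine le_csSup_of_le ?_ ⟨p, hp, rfl⟩ (le_ciInf fun m => ?_)
  · obtain ⟨C, hCpos, hC⟩ := exists_gain_bound h
    obtain ⟨k, -⟩ := hsurj ⟨0, hM⟩
    refine ⟨Real.logb 2 (1 + C * P / σ2), ?_⟩
    rintro _ ⟨q, hq, rfl⟩
    refine (min_rate_le q k).trans ?_
    rw [userRate_eq]
    have h0 := sinr_nonneg (h := h) (μ := μ) hσ q k
    have h1 := sinr_le_noise (μ := μ) hσ hC q k
    have h2 : C * bpow (q (μ k)) / σ2 ≤ C * P / σ2 := by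
      gcongr
      exact bpow_le_total hq _
    exact Real.logb_le_logb_of_le (by norm_num) (by linarith) (by linarith)
  · obtain ⟨k, rfl⟩ := hsurj m
    have : Nonempty {i : Fin K // μ i = μ k} := ⟨⟨k, rfl⟩⟩
    exact le_ciInf fun i => hb i.1

/-- Bounds of order `P ^ d`, from below on the achievable `1 + SINR` and from above on the SINR of
some user, give `d` degrees of freedom. -/
lemma tendsto_of_sinr_bounds (hsurj : Function.Surjective μ) (hM : 0 < M) (hσ : 0 < σ2)
    {a b d : ℝ} (ha : 0 < a) (hb : 0 < b) (hd : 0 ≤ d)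
    (hlow : ∀ P : ℝ, 1 ≤ P → ∃ p : Fin M → Fin N → ℂ, ∑ m, bpow (p m) ≤ P ∧
      ∀ k, a * P ^ d ≤ 1 + sinr h μ σ2 p k)
    (hup : ∀ P : ℝ, 1 ≤ P → ∀ p : Fin M → Fin N → ℂ, ∑ m, bpow (p m) ≤ P →
      ∃ k, sinr h μ σ2 p k ≤ b * P ^ d) :
    Filter.Tendsto (fun P : ℝ => MMFclassical h μ σ2 P / Real.logb 2 P)
      Filter.atTop (nhds d) := by
  have hlog : Filter.Tendsto (fun P : ℝ => Real.logb 2 P) Filter.atTop Filter.atTop :=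
    Real.tendsto_logb_atTop (by norm_num)
  have hlim : ∀ c : ℝ, Filter.Tendsto (fun P : ℝ => Real.logb 2 c / Real.logb 2 P + d)
      Filter.atTop (nhds d) := fun c => by
    simpa using (hlog.const_div_atTop (Real.logb 2 c)).add_const d
  have hsplit : ∀ c P : ℝ, 0 < c → 1 < P →
      Real.logb 2 c / Real.logb 2 P + d = Real.logb 2 (c * P ^ d) / Real.logb 2 P := by
    intro c P hc hP
    have hL : 0 < Real.logb 2 P := Real.logb_pos (by norm_num) hP
    have hPd : 0 < P ^ d := Real.rpow_pos_of_pos (by linarith) d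
    rw [Real.logb_mul hc.ne' hPd.ne', Real.logb_rpow_eq_mul_logb_of_pos (by linarith)]
    field_simp
  refine tendsto_of_tendsto_of_tendsto_of_le_of_le' (hlim a) (hlim (1 + b)) ?_ ?_
  · filter_upwards [Filter.eventually_gt_atTop 1] with P hP
    rw [hsplit a P ha hP]
    have hL : 0 < Real.logb 2 P := Real.logb_pos (by norm_num) hP
    have hPd : 0 < P ^ d := Real.rpow_pos_of_pos (by linarith) d
    obtain ⟨p, hp, hk⟩ := hlow P hP.le
    gcongr
    refine le_MMFclassical hsurj hM hσ p hp fun k => ?_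
    rw [userRate_eq]
    exact Real.logb_le_logb_of_le (by norm_num) (by positivity) (hk k)
  · filter_upwards [Filter.eventually_gt_atTop 1] with P hP
    rw [hsplit (1 + b) P (by linarith) hP]
    have hL : 0 < Real.logb 2 P := Real.logb_pos (by norm_num) hP
    have hPd : 1 ≤ P ^ d := Real.one_le_rpow hP.le hd
    gcongr
    refine (MMFclassical_le hσ (by linarith) (hup P hP.le)).trans ?_
    have : 0 ≤ b * P ^ d := by positivity
    exact Real.logb_le_logb_of_le (by norm_num) (by linarith) (by linarith)

end Sinr

/-! ### Achievability -/

section Achievability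

variable {N K M : ℕ} {h : Fin K → Fin N → ℂ} {μ : Fin K → Fin M} {σ2 : ℝ}

lemma exists_pos_forall_le {ι : Type*} [Finite ι] (f : ι → ℝ) (hf : ∀ i, 0 < f i) :
    ∃ δ : ℝ, 0 < δ ∧ ∀ i, δ ≤ f i := by
  cases isEmpty_or_nonempty ι
  · exact ⟨1, one_pos, fun i => isEmptyElim i⟩
  · obtain ⟨i, hi⟩ := Finite.exists_min f
    exact ⟨f i, hf i, hi⟩

/-- Rescaling beam directions `q m` to prescribed powers. -/
lemma exists_scaled (q : Fin M → Fin N → ℂ) (s : Fin M → ℝ) (hs : ∀ m, 0 ≤ s m) :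
    ∃ p : Fin M → Fin N → ℂ, (∀ m, bpow (p m) = s m * bpow (q m)) ∧
      ∀ g m, ‖hinner g (p m)‖ ^ 2 = s m * ‖hinner g (q m)‖ ^ 2 := by
  have hn : ∀ m, ‖((√(s m) : ℝ) : ℂ)‖ ^ 2 = s m := fun m => by
    rw [Complex.norm_real, Real.norm_eq_abs, sq_abs, Real.sq_sqrt (hs m)]
  refine ⟨fun m => ((√(s m) : ℝ) : ℂ) • q m, fun m => ?_, fun g m => ?_⟩
  · rw [bpow_smul, hn]
  · rw [hinner_smul, norm_mul, mul_pow, hn]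

lemma le_sinr (hσ : 0 < σ2) {A I : ℝ} (p : Fin M → Fin N → ℂ) (k : Fin K)
    (hA : A ≤ ‖hinner (h k) (p (μ k))‖ ^ 2)
    (hI : ∑ m ∈ Finset.univ.erase (μ k), ‖hinner (h k) (p m)‖ ^ 2 ≤ I) :
    A / (I + σ2) ≤ sinr h μ σ2 p k := by
  have := interference_nonneg (h := h) (μ := μ) p k
  exact div_le_div₀ (by positivity) hA (by linarith) (by linarith)

/-- If every beam is invisible to all unintended users, splitting the power in fixed proportions
gives every user an SINR of order `P`. -/
lemma achieve_one (hσ : 0 < σ2) (q : Fin M → Fin N → ℂ)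
    (hne : ∀ k, hinner (h k) (q (μ k)) ≠ 0)
    (hzero : ∀ k m, μ k ≠ m → hinner (h k) (q m) = 0) :
    ∃ a : ℝ, 0 < a ∧ ∀ P : ℝ, 1 ≤ P → ∃ p : Fin M → Fin N → ℂ, ∑ m, bpow (p m) ≤ P ∧
      ∀ k, a * P ≤ sinr h μ σ2 p k := by
  obtain ⟨δ, hδ, hδ'⟩ := exists_pos_forall_le (fun k => ‖hinner (h k) (q (μ k))‖ ^ 2)
    fun k => by have := norm_pos_iff.2 (hne k); positivity
  have hQ0 : 0 ≤ ∑ m, bpow (q m) := Finset.sum_nonneg fun _ _ => bpow_nonneg _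
  set Q := ∑ m, bpow (q m) + 1 with hQdef
  have hQ : 0 < Q := by linarith
  refine ⟨δ / Q / σ2, by positivity, fun P hP => ?_⟩
  obtain ⟨p, hp1, hp2⟩ := exists_scaled q (fun _ => P / Q) fun _ => by positivity
  refine ⟨p, ?_, fun k => ?_⟩
  · simp only [hp1]
    rw [← Finset.mul_sum, div_mul_eq_mul_div, div_le_iff₀ hQ]
    gcongr
    linarith
  · have hA : P / Q * δ ≤ ‖hinner (h k) (p (μ k))‖ ^ 2 := by
      rw [hp2]
      gcongr
      exact hδ' k
    have hI : ∑ m ∈ Finset.univ.erase (μ k), ‖hinner (h k) (p m)‖ ^ 2 ≤ 0 := by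
      refine (Finset.sum_eq_zero fun m hm => ?_).le
      rw [hp2, hzero k m (Finset.ne_of_mem_erase hm).symm]
      simp
    refine le_trans (le_of_eq ?_) (le_sinr hσ p k hA hI)
    field_simp
    simp

/-- If the beams may be heard, apart from their own group, only by the group `l`, then transmitting
to `l` with power of order `P` and to the other groups with power of order `√P` gives every user
an SINR of order `√P`. -/
lemma achieve_half (hσ : 0 < σ2) (q : Fin M → Fin N → ℂ) (l : Fin M)
    (hne : ∀ k, hinner (h k) (q (μ k)) ≠ 0)
    (hzero : ∀ k m, μ k ≠ m → μ k ≠ l → hinner (h k) (q m) = 0) :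
    ∃ a : ℝ, 0 < a ∧ ∀ P : ℝ, 1 ≤ P → ∃ p : Fin M → Fin N → ℂ, ∑ m, bpow (p m) ≤ P ∧
      ∀ k, a * √P ≤ sinr h μ σ2 p k := by
  obtain ⟨δ, hδ, hδ'⟩ := exists_pos_forall_le (fun k => ‖hinner (h k) (q (μ k))‖ ^ 2)
    fun k => by have := norm_pos_iff.2 (hne k); positivity
  obtain ⟨C, hCpos, hC⟩ := exists_gain_bound h
  have hQ0 : 0 ≤ ∑ m, bpow (q m) := Finset.sum_nonneg fun _ _ => bpow_nonneg _
  set Q := ∑ m, bpow (q m) + 1 with hQdef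
  have hQ : 0 < Q := by linarith
  refine ⟨δ / Q / (C + σ2), by positivity, fun P hP => ?_⟩
  obtain ⟨t, ht, hPt⟩ : ∃ t : ℝ, 1 ≤ t ∧ P = t ^ 2 :=
    ⟨√P, Real.one_le_sqrt.2 hP, (Real.sq_sqrt (by linarith)).symm⟩
  have ht0 : 0 < t := by linarith
  have htsq : t ≤ t ^ 2 := by nlinarith
  subst hPt
  rw [Real.sqrt_sq ht0.le]
  obtain ⟨p, hp1, hp2⟩ := exists_scaled q (fun m => if m = l then t ^ 2 / Q else t / Q)
    fun m => by split_ifs <;> positivity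
  refine ⟨p, ?_, fun k => ?_⟩
  · calc ∑ m, bpow (p m) ≤ ∑ m, t ^ 2 / Q * bpow (q m) := by
          refine Finset.sum_le_sum fun m _ => ?_
          rw [hp1]
          refine mul_le_mul_of_nonneg_right ?_ (bpow_nonneg _)
          split_ifs
          · rfl
          · gcongr
      _ ≤ t ^ 2 := by
          rw [← Finset.mul_sum, div_mul_eq_mul_div, div_le_iff₀ hQ]
          gcongr
          linarith
  by_cases hk : μ k = l
  · have hA : t ^ 2 / Q * δ ≤ ‖hinner (h k) (p (μ k))‖ ^ 2 := by
      rw [hp2, if_pos hk]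
      gcongr
      exact hδ' k
    have hI : ∑ m ∈ Finset.univ.erase (μ k), ‖hinner (h k) (p m)‖ ^ 2 ≤ t * C := by
      calc ∑ m ∈ Finset.univ.erase (μ k), ‖hinner (h k) (p m)‖ ^ 2
          ≤ ∑ m ∈ Finset.univ.erase (μ k), t / Q * (C * bpow (q m)) := by
            refine Finset.sum_le_sum fun m hm => ?_
            rw [hp2, if_neg (hk ▸ Finset.ne_of_mem_erase hm)]
            gcongr
            exact hC k _
        _ ≤ ∑ m, t / Q * (C * bpow (q m)) :=
            Finset.sum_le_sum_of_subset_of_nonneg (Finset.subset_univ _) fun m _ _ => by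
              have := bpow_nonneg (q m)
              positivity
        _ = t * C * (∑ m, bpow (q m)) / Q := by
            rw [← Finset.mul_sum, ← Finset.mul_sum]
            ring
        _ ≤ t * C := by
            rw [div_le_iff₀ hQ]
            gcongr
            linarith
    refine le_trans ?_ (le_sinr hσ p k hA hI)
    calc δ / Q / (C + σ2) * t = t ^ 2 / Q * δ / (t * (C + σ2)) := by field_simp
      _ ≤ t ^ 2 / Q * δ / (t * C + σ2) := by
          gcongr
          nlinarith
  · have hA : t / Q * δ ≤ ‖hinner (h k) (p (μ k))‖ ^ 2 := by
      rw [hp2, if_neg hk]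
      gcongr
      exact hδ' k
    have hI : ∑ m ∈ Finset.univ.erase (μ k), ‖hinner (h k) (p m)‖ ^ 2 ≤ 0 := by
      refine (Finset.sum_eq_zero fun m hm => ?_).le
      rw [hp2, hzero k m (Finset.ne_of_mem_erase hm).symm hk]
      simp
    refine le_trans ?_ (le_sinr hσ p k hA hI)
    calc δ / Q / (C + σ2) * t = t / Q * δ / (C + σ2) := by ring
      _ ≤ t / Q * δ / (0 + σ2) := by gcongr

end Achievability

/-! ### Converse bounds -/

section Converse

variable {N K M : ℕ} {h : Fin K → Fin N → ℂ} {μ : Fin K → Fin M} {σ2 : ℝ}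

lemma converse_one (hσ : 0 < σ2) (k : Fin K) :
    ∃ b : ℝ, 0 < b ∧ ∀ P : ℝ, 1 ≤ P → ∀ p : Fin M → Fin N → ℂ, ∑ m, bpow (p m) ≤ P →
      ∃ k, sinr h μ σ2 p k ≤ b * P := by
  obtain ⟨C, hCpos, hC⟩ := exists_gain_bound h
  refine ⟨C / σ2, by positivity, fun P _ p hp => ⟨k, (sinr_le_noise hσ hC p k).trans ?_⟩⟩
  rw [div_mul_eq_mul_div]
  gcongr
  exact bpow_le_total hp _

/-- If the users outside a group `m` are at least `N` in number, one of them hears the beam of `m`: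
either that beam has power at most `√P`, which limits group `m`, or it disturbs that user by at
least a multiple of `√P`. -/
lemma converse_half (hσ : 0 < σ2) (hN : 1 ≤ N) (hrank : GenericRank h) (k₀ : Fin K)
    (hcard : N ≤ (Finset.univ.filter fun k => μ k ≠ μ k₀).card) :
    ∃ b : ℝ, 0 < b ∧ ∀ P : ℝ, 1 ≤ P → ∀ p : Fin M → Fin N → ℂ, ∑ m, bpow (p m) ≤ P →
      ∃ k, sinr h μ σ2 p k ≤ b * √P := by
  obtain ⟨C, hCpos, hC⟩ := exists_gain_bound h
  obtain ⟨c, hc, hex⟩ := exists_pos_le_hinner hrank hN _ hcard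
  refine ⟨C / σ2 + C / c, by positivity, fun P hP p hp => ?_⟩
  have ht : 0 < √P := Real.sqrt_pos.2 (by linarith)
  have hsq : √P * √P = P := Real.mul_self_sqrt (by linarith)
  rcases le_total (bpow (p (μ k₀))) (√P) with hle | hge
  · refine ⟨k₀, (sinr_le_noise hσ hC p k₀).trans ?_⟩
    calc C * bpow (p (μ k₀)) / σ2 ≤ C * √P / σ2 := by gcongr
      _ = C / σ2 * √P := by ring
      _ ≤ _ := by
        gcongr
        have : 0 < C / c := by positivity
        linarith
  · obtain ⟨k, hk, hck⟩ := hex (p (μ k₀))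
    have hI : c * √P ≤ ‖hinner (h k) (p (μ k₀))‖ ^ 2 := le_trans (by gcongr) hck
    refine ⟨k, (sinr_le_interference hσ (by positivity) hC p k
      (Finset.mem_filter.1 hk).2 hI).trans ?_⟩
    calc C * bpow (p (μ k)) / (c * √P) ≤ C * (√P * √P) / (c * √P) := by
          rw [hsq]
          gcongr
          exact bpow_le_total hp _
      _ = C / c * √P := by field_simp
      _ ≤ _ := by
        gcongr
        have : 0 < C / σ2 := by positivity
        linarith

/-- If every group has at least `N` users outside it, then the strongest beam is heard by a user
of another group, whose SINR is therefore bounded independently of the power. -/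
lemma converse_zero (hσ : 0 < σ2) (hN : 1 ≤ N) (hM : 0 < M) (hrank : GenericRank h)
    (hsurj : Function.Surjective μ)
    (hcard : ∀ m, N ≤ (Finset.univ.filter fun k => μ k ≠ m).card) :
    ∃ b : ℝ, 0 < b ∧ ∀ p : Fin M → Fin N → ℂ, ∃ k, sinr h μ σ2 p k ≤ b := by
  have : Nonempty (Fin M) := ⟨⟨0, hM⟩⟩
  obtain ⟨C, hCpos, hC⟩ := exists_gain_bound h
  choose c hc hex using fun m => exists_pos_le_hinner hrank hN _ (hcard m)
  obtain ⟨δ, hδ, hδ'⟩ := exists_pos_forall_le c hc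
  refine ⟨C / δ, by positivity, fun p => ?_⟩
  obtain ⟨m, hm⟩ := Finite.exists_max fun m => bpow (p m)
  rcases (bpow_nonneg (p m)).eq_or_lt with h0 | hpos
  · obtain ⟨k, rfl⟩ := hsurj m
    refine ⟨k, (sinr_le_noise hσ hC p k).trans ?_⟩
    rw [← h0, mul_zero, zero_div]
    positivity
  · obtain ⟨k, hk, hck⟩ := hex m (p m)
    have hI : δ * bpow (p m) ≤ ‖hinner (h k) (p m)‖ ^ 2 :=
      le_trans (by gcongr; exact hδ' m) hck
    refine ⟨k, (sinr_le_interference hσ (by positivity) hC p k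
      (Finset.mem_filter.1 hk).2 hI).trans ?_⟩
    calc C * bpow (p (μ k)) / (δ * bpow (p m)) ≤ C * bpow (p m) / (δ * bpow (p m)) := by
          gcongr
          exact hm _
      _ = C / δ := by field_simp

end Converse

/-! ### Counting users -/

section Counting

variable {K M : ℕ} (μ : Fin K → Fin M)

lemma card_ne_add_Gsize (m : Fin M) :
    (Finset.univ.filter fun k => μ k ≠ m).card + Gsize μ m = K := by
  have := Finset.card_filter_add_card_filter_not (s := Finset.univ) fun k : Fin K => μ k ≠ m
  simpa [Gsize, Fin.val_inj] using this

lemma sum_Gsize : ∑ m ∈ Finset.range M, Gsize μ m = K := by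
  have h1 := Finset.card_eq_sum_card_fiberwise (f := fun k => (μ k : ℕ))
    (s := (Finset.univ : Finset (Fin K))) (t := Finset.range M)
    (fun k _ => by simp)
  simpa [Gsize] using h1.symm

lemma NL_add_Gsize (hM : 2 ≤ M) : NL μ M + Gsize μ 0 = 1 + K := by
  have h1 := sum_Gsize μ
  rw [Finset.range_eq_Ico, Finset.sum_eq_sum_Ico_succ_bot (by omega)] at h1
  simp only [NL]
  simp only [zero_add] at h1
  omega

lemma NL_pred_add_Gsize (hM : 2 ≤ M) :
    NL μ (M - 1) + Gsize μ 0 + Gsize μ (M - 1) = 1 + K := by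
  rw [← NL_add_Gsize μ hM]
  obtain ⟨n, rfl⟩ : ∃ n, M = n + 1 := ⟨M - 1, by omega⟩
  simp only [NL, Nat.add_sub_cancel]
  rw [Finset.sum_Ico_succ_top (by omega)]
  omega

end Counting

/-- **Proposition 1 (MMF-DoF of classical beamforming).** With `M ≥ 2` groups (each
nonempty, of nondecreasing sizes), `N ≥ 1` antennas, noise variance `σ² > 0` and generic
channels, `ℛ(P)/log₂ P` converges as `P → ∞` to `1` if `N ≥ N_M`, to `1/2` if
`N_{M−1} + G₁ ≤ N < N_M`, and to `0` if `N < N_{M−1} + G₁`. -/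
theorem stmt0 {N K M : ℕ} (hM : 2 ≤ M) (hN : 1 ≤ N)
    (h : Fin K → Fin N → ℂ) (μ : Fin K → Fin M) (hsurj : Function.Surjective μ)
    (hrank : GenericRank h)
    (hord : ∀ m m' : ℕ, m ≤ m' → m' < M → Gsize μ m ≤ Gsize μ m')
    (σ2 : ℝ) (hσ : 0 < σ2) :
    Filter.Tendsto (fun P : ℝ => MMFclassical h μ σ2 P / Real.logb 2 P)
      Filter.atTop (nhds
        (if NL μ M ≤ N then (1 : ℝ)
         else if NL μ (M - 1) + Gsize μ 0 ≤ N then 1 / 2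
         else 0)) := by
  have hM0 : 0 < M := by omega
  have hK1 := NL_add_Gsize μ hM
  have hK2 := NL_pred_add_Gsize μ hM
  obtain ⟨k₀, hk₀⟩ := hsurj ⟨0, hM0⟩
  split_ifs with h1 h2
  · have hex := fun m => exists_zero_forcing hrank (Finset.univ.filter fun k => μ k ≠ m) (by
      have e1 := card_ne_add_Gsize μ m
      have e2 := hord 0 m (Nat.zero_le _) m.2
      omega)
    choose q hq0 hq1 using hex
    obtain ⟨a, ha, hlow⟩ := achieve_one (h := h) (μ := μ) hσ q
      (fun k => hq1 _ k (by simp)) (fun k m hkm => hq0 m k (by simpa using hkm))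
    obtain ⟨b, hb, hup⟩ := converse_one (h := h) (μ := μ) hσ k₀
    refine tendsto_of_sinr_bounds hsurj hM0 hσ ha hb zero_le_one ?_ (by simpa using hup)
    intro P hP
    obtain ⟨p, hp, hk⟩ := hlow P hP
    exact ⟨p, hp, fun k => by rw [Real.rpow_one]; linarith [hk k]⟩
  · -- Beams avoid all unintended users outside the largest group `l`; this set of users
    -- always lies outside `l`, hence has fewer than `N` elements.
    let l : Fin M := ⟨M - 1, by omega⟩
    have hex := fun m => exists_zero_forcing hrank
      (Finset.univ.filter fun k => μ k ≠ m ∧ μ k ≠ l) (by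
      have e1 := card_ne_add_Gsize μ l
      have e2 : (Finset.univ.filter fun k => μ k ≠ m ∧ μ k ≠ l).card ≤
          (Finset.univ.filter fun k => μ k ≠ l).card :=
        Finset.card_le_card fun k hk => by simp at hk ⊢; exact hk.2
      have e3 : Gsize μ (l : ℕ) = Gsize μ (M - 1) := rfl
      omega)
    choose q hq0 hq1 using hex
    obtain ⟨a, ha, hlow⟩ := achieve_half (h := h) (μ := μ) hσ q l
      (fun k => hq1 _ k (by simp)) (fun k m hkm hkl => hq0 m k (by simp [hkm, hkl]))
    obtain ⟨b, hb, hup⟩ := converse_half (h := h) (μ := μ) hσ hN hrank k₀ (by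
      have e1 := card_ne_add_Gsize μ (μ k₀)
      have e2 : Gsize μ (μ k₀ : ℕ) = Gsize μ 0 := by rw [hk₀]
      omega)
    refine tendsto_of_sinr_bounds hsurj hM0 hσ ha hb (by norm_num) ?_
      (by simpa only [← Real.sqrt_eq_rpow] using hup)
    intro P hP
    obtain ⟨p, hp, hk⟩ := hlow P hP
    exact ⟨p, hp, fun k => by rw [← Real.sqrt_eq_rpow]; linarith [hk k]⟩
  · obtain ⟨b, hb, hup⟩ := converse_zero (h := h) (μ := μ) hσ hN hM0 hrank hsurj (fun m => by
      have e1 := card_ne_add_Gsize μ m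
      have e2 := hord m (M - 1) (by omega) (by omega)
      omega)
    refine tendsto_of_sinr_bounds hsurj hM0 hσ one_pos hb le_rfl ?_
      (fun P _ p _ => by simpa using hup p)
    -- Nonnegativity of the rate suffices from below, so zero beams do.
    intro P hP
    refine ⟨0, by simp [bpow]; linarith, fun k => ?_⟩
    rw [Real.rpow_zero]
    linarith [sinr_nonneg (h := h) (μ := μ) hσ 0 k]
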